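/- arXiv:1112.4071 — 3 statements merged into one kernel-verified Lean document; each statement's English description precedes it below -/
import Mathlib

section
/- Let λ_1, λ_2, … be distinct real numbers with λ_j > −1/2, and define K_n(x) = ∑_{j=1}^n a_{j,n} x^{λ_j} on (0,1], where a_{j,n} = (∏_{l=1}^n (λ_j + λ_l + 1)) / (∏_{l=1, l≠j}^n (λ_j − λ_l)), with the convention K_0 ≡ 0. Then for every n ≥ 1 and every x ∈ (0,1] the sequence (K_n) satisfies the integro-difference equation K_n(x) = K_{n−1}(x) + (2λ_n + 1) x^{λ_n} ( 1 − ∫_x^1 u^{−λ_n − 1} K_{n−1}(u) du ). -/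
open Finset MeasureTheory intervalIntegral

/-- The coefficients `a_{j,n}` of the Müntz polynomial `K_n`. -/
noncomputable def muntzA (lam : ℕ → ℝ) (n j : ℕ) : ℝ :=
  (∏ l ∈ Finset.Icc 1 n, (lam j + lam l + 1)) /
    (∏ l ∈ (Finset.Icc 1 n).erase j, (lam j - lam l))

/-- The Müntz polynomial `K_n(x) = ∑_{j=1}^n a_{j,n} x^{λ_j}`. -/
noncomputable def muntzK (lam : ℕ → ℝ) (n : ℕ) (x : ℝ) : ℝ :=
  ∑ j ∈ Finset.Icc 1 n, muntzA lam n j * x ^ lam j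

/-!
Passing from `n - 1` to `n` multiplies each old coefficient `a_{j,n-1}` by
`(λ_j + λ_n + 1) / (λ_j - λ_n) = 1 + (2 λ_n + 1) / (λ_j - λ_n)`, while the new coefficient is
`a_{n,n} = (2 λ_n + 1) ∏_{l < n} (λ_n + λ_l + 1) / (λ_n - λ_l)`. The partial fraction expansion of
`∏_{l < n} (t + λ_l + 1) / (t - λ_l)` has the residues `a_{j,n-1}`, so at `t = λ_n` it expresses
`a_{n,n}` through the old coefficients. The resulting formula for `K_n - K_{n-1}` is what
integrating `u ^ (-λ_n - 1) K_{n-1}(u)` term by term produces.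
-/

theorem prod_sub_div_sub_eq_one_add_sum {ι F : Type*} [DecidableEq ι] [Field F] (s : Finset ι)
    {a : ι → F} (b : ι → F) (ha : Set.InjOn a s) {t : F} (ht : ∀ i ∈ s, t ≠ a i) :
    ∏ i ∈ s, (t - b i) / (t - a i) =
      1 + ∑ i ∈ s, (∏ l ∈ s, (a i - b l)) / (∏ l ∈ s.erase i, (a i - a l)) / (t - a i) := by
  -- The two nodal polynomials are monic of equal degree, so their difference is determined by its
  -- values at the `a i`.
  have degree_lt : (Lagrange.nodal s b - Lagrange.nodal s a).degree < #s := by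
    rw [← Lagrange.degree_nodal (s := s) (v := b)]
    refine Polynomial.degree_sub_lt_left ?_ Lagrange.nodal_ne_zero ?_
    · rw [Lagrange.degree_nodal, Lagrange.degree_nodal]
    · rw [Lagrange.nodal_monic.leadingCoeff, Lagrange.nodal_monic.leadingCoeff]
  have interpolation := congrArg (Polynomial.eval t) <|
    Lagrange.eq_interpolate_of_eval_eq (fun i => ∏ l ∈ s, (a i - b l)) ha degree_lt
      fun i hi => by
        rw [Polynomial.eval_sub, Lagrange.eval_nodal_at_node hi, sub_zero, Lagrange.eval_nodal]
  rw [Lagrange.eval_interpolate_not_at_node _ ht, Polynomial.eval_sub, sub_eq_iff_eq_add',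
    Lagrange.eval_nodal] at interpolation
  rw [Finset.prod_div_distrib, interpolation, ← Lagrange.eval_nodal,
    ← mul_one_add, mul_div_cancel_left₀ _ (Lagrange.eval_nodal_not_at_node ht)]
  congr 1
  refine Finset.sum_congr rfl fun i _ => ?_
  rw [Lagrange.nodalWeight, Finset.prod_inv_distrib]
  ring

theorem muntzA_succ_of_ne (lam : ℕ → ℝ) {m j : ℕ} (hj : lam j ≠ lam (m + 1)) :
    muntzA lam (m + 1) j =
      muntzA lam m j + (2 * lam (m + 1) + 1) * (muntzA lam m j / (lam j - lam (m + 1))) := by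
  have index_ne : m + 1 ≠ j := fun h => hj (congrArg lam h.symm)
  have factor : muntzA lam (m + 1) j =
      (lam j + lam (m + 1) + 1) / (lam j - lam (m + 1)) * muntzA lam m j := by
    rw [muntzA, muntzA, ← Finset.insert_Icc_right_eq_Icc_add_one (by lia),
      Finset.prod_insert (by simp), Finset.erase_insert_of_ne index_ne,
      Finset.prod_insert (by simp), mul_div_mul_comm]
  have sub_ne : lam j - lam (m + 1) ≠ 0 := sub_ne_zero.2 hj
  rw [factor]
  field_simp
  ring

theorem apply_ne_apply_succ_of_injOn {α : Type*} {f : ℕ → α} {m j : ℕ}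
    (hinj : Set.InjOn f (Set.Icc 1 (m + 1))) (hj : j ∈ Finset.Icc 1 m) :
    f j ≠ f (m + 1) := by
  rw [Finset.mem_Icc] at hj
  exact hinj.ne ⟨hj.1, by lia⟩ ⟨by lia, le_rfl⟩ (by lia)

theorem muntzA_succ_self {lam : ℕ → ℝ} {m : ℕ} (hinj : Set.InjOn lam (Set.Icc 1 (m + 1))) :
    muntzA lam (m + 1) (m + 1) =
      (2 * lam (m + 1) + 1) *
        (1 + ∑ j ∈ Finset.Icc 1 m, muntzA lam m j / (lam (m + 1) - lam j)) := by
  have inj_old : Set.InjOn lam (Finset.Icc 1 m) := by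
    rw [Finset.coe_Icc]
    exact hinj.mono (Set.Icc_subset_Icc_right m.le_succ)
  have expansion := prod_sub_div_sub_eq_one_add_sum (Finset.Icc 1 m) (fun l => -(lam l + 1))
    inj_old fun j hj => (apply_ne_apply_succ_of_injOn hinj hj).symm
  simp only [sub_neg_eq_add, ← add_assoc] at expansion
  simp only [muntzA]
  rw [← expansion, ← Finset.insert_Icc_right_eq_Icc_add_one (by lia),
    Finset.prod_insert (by simp), Finset.erase_insert (by simp), Finset.prod_div_distrib,
    mul_div_assoc, two_mul]

theorem muntzK_succ {lam : ℕ → ℝ} {m : ℕ} (hinj : Set.InjOn lam (Set.Icc 1 (m + 1))) (x : ℝ) :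
    muntzK lam (m + 1) x =
      muntzK lam m x + (2 * lam (m + 1) + 1) *
        (x ^ lam (m + 1) *
            (1 + ∑ j ∈ Finset.Icc 1 m, muntzA lam m j / (lam (m + 1) - lam j)) +
          ∑ j ∈ Finset.Icc 1 m, muntzA lam m j / (lam j - lam (m + 1)) * x ^ lam j) := by
  have old_terms : ∑ j ∈ Finset.Icc 1 m, muntzA lam (m + 1) j * x ^ lam j =
      muntzK lam m x + (2 * lam (m + 1) + 1) *
        ∑ j ∈ Finset.Icc 1 m, muntzA lam m j / (lam j - lam (m + 1)) * x ^ lam j := by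
    rw [muntzK, Finset.mul_sum, ← Finset.sum_add_distrib]
    refine Finset.sum_congr rfl fun j hj => ?_
    rw [muntzA_succ_of_ne lam (apply_ne_apply_succ_of_injOn hinj hj), add_mul, mul_assoc]
  rw [muntzK, Finset.sum_Icc_succ_top (by lia), old_terms, muntzA_succ_self hinj]
  ring

theorem rpow_mul_muntzK (lam : ℕ → ℝ) (n : ℕ) (c : ℝ) {x : ℝ} (hx : 0 < x) :
    x ^ c * muntzK lam n x = ∑ j ∈ Finset.Icc 1 n, muntzA lam n j * x ^ (c + lam j) := by
  rw [muntzK, Finset.mul_sum]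
  refine Finset.sum_congr rfl fun j _ => ?_
  rw [mul_left_comm, Real.rpow_add hx]

theorem integral_rpow_mul_muntzK (lam : ℕ → ℝ) (n : ℕ) {c x y : ℝ}
    (hc : ∀ j ∈ Finset.Icc 1 n, c + lam j ≠ -1) (hx : 0 < x) (hy : 0 < y) :
    ∫ u in x..y, u ^ c * muntzK lam n u =
      ∑ j ∈ Finset.Icc 1 n,
        muntzA lam n j * ((y ^ (c + lam j + 1) - x ^ (c + lam j + 1)) / (c + lam j + 1)) := by
  have zero_notMem : (0 : ℝ) ∉ Set.uIcc x y := Set.notMem_uIcc_of_lt hx hy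
  calc
    ∫ u in x..y, u ^ c * muntzK lam n u
      = ∫ u in x..y, ∑ j ∈ Finset.Icc 1 n, muntzA lam n j * u ^ (c + lam j) :=
        integral_congr fun u hu => rpow_mul_muntzK lam n c ((lt_min hx hy).trans_le hu.1)
    _ = ∑ j ∈ Finset.Icc 1 n, muntzA lam n j * ∫ u in x..y, u ^ (c + lam j) := by
        rw [integral_finsetSum fun j _ =>
          (intervalIntegrable_rpow (Or.inr zero_notMem)).const_mul _]
        simp only [intervalIntegral.integral_const_mul]
    _ = _ := Finset.sum_congr rfl fun j hj => by
        rw [integral_rpow (Or.inr ⟨hc j hj, zero_notMem⟩)]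

theorem rpow_mul_one_sub_integral_muntzK (lam : ℕ → ℝ) (n : ℕ) {c x : ℝ}
    (hc : ∀ j ∈ Finset.Icc 1 n, lam j ≠ c) (hx : 0 < x) :
    x ^ c * (1 - ∫ u in x..(1 : ℝ), u ^ (-c - 1) * muntzK lam n u) =
      x ^ c * (1 + ∑ j ∈ Finset.Icc 1 n, muntzA lam n j / (c - lam j)) +
        ∑ j ∈ Finset.Icc 1 n, muntzA lam n j / (lam j - c) * x ^ lam j := by
  have exponent_ne : ∀ j ∈ Finset.Icc 1 n, -c - 1 + lam j ≠ -1 :=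
    fun j hj h => hc j hj (by linarith)
  rw [integral_rpow_mul_muntzK lam n exponent_ne hx one_pos, mul_one_sub, mul_one_add, add_assoc,
    sub_eq_add_neg, ← mul_neg, ← Finset.sum_neg_distrib, Finset.mul_sum, Finset.mul_sum,
    ← Finset.sum_add_distrib]
  congr 1
  refine Finset.sum_congr rfl fun j _ => ?_
  have exponent_eq : -c - 1 + lam j + 1 = lam j - c := by ring
  have rpow_split : x ^ lam j = x ^ c * x ^ (lam j - c) := by
    rw [← Real.rpow_add hx, add_sub_cancel]
  rw [exponent_eq, Real.one_rpow, rpow_split, ← neg_sub (lam j) c, div_neg]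
  ring

theorem muntzK_integro_difference_general {lam : ℕ → ℝ} {m : ℕ}
    (hinj : Set.InjOn lam (Set.Icc 1 (m + 1))) {x : ℝ} (hx : 0 < x) :
    muntzK lam (m + 1) x =
      muntzK lam m x +
        (2 * lam (m + 1) + 1) * x ^ lam (m + 1) *
          (1 - ∫ u in x..(1 : ℝ), u ^ (-(lam (m + 1)) - 1) * muntzK lam m u) := by
  rw [muntzK_succ hinj, mul_assoc,
    rpow_mul_one_sub_integral_muntzK lam m (fun _ => apply_ne_apply_succ_of_injOn hinj) hx]

theorem muntzK_integro_difference (lam : ℕ → ℝ)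
    (hpos : ∀ j, 1 ≤ j → lam j > -(1/2 : ℝ))
    (hdist : ∀ j k, 1 ≤ j → 1 ≤ k → j ≠ k → lam j ≠ lam k) :
    ∀ n, 1 ≤ n → ∀ x ∈ Set.Ioc (0:ℝ) 1,
      muntzK lam n x =
        muntzK lam (n - 1) x +
          (2 * lam n + 1) * x ^ lam n *
            (1 - ∫ u in x..(1:ℝ), u ^ (-(lam n) - 1) * muntzK lam (n - 1) u) := by
  rintro (_ | m) hn x hx
  · exact absurd hn (by decide)
  · exact muntzK_integro_difference_general
      (fun j hj k hk => not_imp_not.1 (hdist j k hj.1 hk.1)) hx.1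
end

section
/- Let n ≥ 1, let λ_1, …, λ_n be distinct real numbers with λ_j > −1/2, let L_1(x) = x^{λ_1} and, for k ≥ 2, L_k(x) = ∑_{j=1}^k c_{j,k} x^{λ_j} with c_{j,k} = (∏_{l=1}^{k−1} (λ_l + λ_j + 1)) / (∏_{l=1, l≠j}^k (λ_j − λ_l)). Fix t > 0 and define g_{n,t}(u,v) = (1/t) ∑_{l=1}^n (1 + 2λ_l) L_l(u/t) L_l(v/t) for u, v ∈ (0,t]. Then g_{n,t} reproduces the Müntz space spanned by x^{λ_1}, …, x^{λ_n}: for every j ∈ {1, …, n} and every u ∈ (0,t], ∫_0^t g_{n,t}(u,v) v^{λ_j} dv = u^{λ_j}. -/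
open Finset MeasureTheory intervalIntegral

/-- The coefficients `c_{j,k}` of the Müntz–Legendre polynomial `L_k`.
For `k = 1` both products are empty, so `c_{1,1} = 1` and `L_1(x) = x^{λ_1}`. -/
noncomputable def muntzC (lam : ℕ → ℝ) (j k : ℕ) : ℝ :=
  (∏ l ∈ Finset.Icc 1 (k - 1), (lam l + lam j + 1)) /
    (∏ l ∈ (Finset.Icc 1 k).erase j, (lam j - lam l))

/-- The Müntz–Legendre polynomial `L_k(x) = ∑_{j=1}^k c_{j,k} x^{λ_j}`. -/
noncomputable def muntzL (lam : ℕ → ℝ) (k : ℕ) (x : ℝ) : ℝ :=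
  ∑ j ∈ Finset.Icc 1 k, muntzC lam j k * x ^ lam j

/-- The reproducing kernel of the Müntz space `M_{n,t}` in `L²[0,t]`. -/
noncomputable def muntzKernel (lam : ℕ → ℝ) (n : ℕ) (t u v : ℝ) : ℝ :=
  (1 / t) * ∑ l ∈ Finset.Icc 1 n, (1 + 2 * lam l) * muntzL lam l (u / t) * muntzL lam l (v / t)

/-! Write `M_k(μ) = ∫₀¹ L_k(x) x^μ dx`. The coefficient `c_{j,k}` is the residue at `μ = -λ_j - 1`
of `∏_{l<k} (μ - λ_l) / ∏_{l≤k} (λ_l + μ + 1)`, so this rational function equals `M_k(μ)`. The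
partial sums of `∑_l (1 + 2λ_l) M_l(μ) L_l(x)` then telescope: the coefficient of `x^{λ_i}` in the
`n`-th one is `∏_{r≤n} (λ_r + λ_i + 1) / (λ_r + μ + 1)` times the value at `μ` of the Lagrange basis
polynomial of `λ_i` for the nodes `λ_1, …, λ_n`. At `μ = λ_j` it is `1` if `i = j` and `0`
otherwise. -/

section PartialFractions

variable {ι F : Type*} [DecidableEq ι] [Field F]

theorem eval_div_prod_sub_eq_sum {s : Finset ι} {v : ι → F} (hv : Set.InjOn v s)
    {p : Polynomial F} (hp : p.degree < #s) {x : F} (hx : ∀ i ∈ s, x ≠ v i) :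
    p.eval x / ∏ i ∈ s, (x - v i) =
      ∑ i ∈ s, p.eval (v i) / (∏ l ∈ s.erase i, (v i - v l)) / (x - v i) := by
  have hprod : ∏ i ∈ s, (x - v i) ≠ 0 :=
    prod_ne_zero_iff.2 fun i hi => sub_ne_zero.2 (hx i hi)
  rw [div_eq_iff hprod, mul_comm, Lagrange.eq_interpolate hv hp,
    Lagrange.eval_interpolate_not_at_node _ hx, Lagrange.eval_nodal,
    ← Lagrange.eq_interpolate hv hp]
  congr 1
  refine sum_congr rfl fun i _ => ?_
  rw [Lagrange.nodalWeight, prod_inv_distrib, div_div, div_eq_mul_inv, mul_inv]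
  ring

end PartialFractions

theorem prod_erase_Icc_one_succ {M : Type*} [CommMonoid M] (f : ℕ → M) {i n : ℕ} (hi : i ≤ n) :
    ∏ r ∈ (Icc 1 (n + 1)).erase i, f r = (∏ r ∈ (Icc 1 n).erase i, f r) * f (n + 1) := by
  rw [← insert_Icc_right_eq_Icc_add_one (by omega), erase_insert_of_ne (by omega),
    prod_insert (by simp), mul_comm]

/-- The moment `∫₀¹ L_k(x) x^μ dx` of the Müntz–Legendre polynomial `L_k`, `k ≥ 1`, in closed form:
`∏_{l<k} (μ - λ_l) / ∏_{l≤k} (λ_l + μ + 1)`. -/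
noncomputable def muntzMoment (lam : ℕ → ℝ) (k : ℕ) (μ : ℝ) : ℝ :=
  (∏ l ∈ Icc 1 (k - 1), (μ - lam l)) / ∏ l ∈ Icc 1 k, (lam l + μ + 1)

/-- The coefficient of `x^{λ_i}` in the orthogonal projection of `x^μ` onto the span of
`x^{λ_1}, …, x^{λ_n}` in `L²[0,1]`. -/
noncomputable def muntzProjCoeff (lam : ℕ → ℝ) (n i : ℕ) (μ : ℝ) : ℝ :=
  (∏ r ∈ Icc 1 n, (lam r + lam i + 1) / (lam r + μ + 1)) *
    ∏ r ∈ (Icc 1 n).erase i, (μ - lam r) / (lam i - lam r)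

variable {lam : ℕ → ℝ} {i j k n : ℕ} {t u μ : ℝ}

theorem muntzC_eq_residue (hj : j ∈ Icc 1 k) :
    muntzC lam j k = (∏ l ∈ Icc 1 (k - 1), (-lam j - 1 - lam l)) /
      ∏ l ∈ (Icc 1 k).erase j, ((-lam j - 1) - (-lam l - 1)) := by
  have hnum : ∏ l ∈ Icc 1 (k - 1), (-lam j - 1 - lam l) =
      (-1) ^ (k - 1) * ∏ l ∈ Icc 1 (k - 1), (lam l + lam j + 1) := by
    rw [prod_congr rfl fun l _ => show -lam j - 1 - lam l = -(lam l + lam j + 1) by ring,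
      prod_neg, Nat.card_Icc, Nat.add_sub_cancel]
  have hden : ∏ l ∈ (Icc 1 k).erase j, ((-lam j - 1) - (-lam l - 1)) =
      (-1) ^ (k - 1) * ∏ l ∈ (Icc 1 k).erase j, (lam j - lam l) := by
    rw [prod_congr rfl fun l _ => show (-lam j - 1) - (-lam l - 1) = -(lam j - lam l) by ring,
      prod_neg, card_erase_of_mem hj, Nat.card_Icc, Nat.add_sub_cancel]
  rw [hnum, hden, mul_div_mul_left _ _ (pow_ne_zero _ (by norm_num)), muntzC]

theorem sum_muntzC_div (hk : 1 ≤ k) (hinj : Set.InjOn lam (Icc 1 k : Finset ℕ))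
    (hμ : ∀ i ∈ Icc 1 k, lam i + μ + 1 ≠ 0) :
    ∑ i ∈ Icc 1 k, muntzC lam i k / (lam i + μ + 1) = muntzMoment lam k μ := by
  have hpole : Set.InjOn (fun i => -lam i - 1) (Icc 1 k : Finset ℕ) := fun a ha b hb hab =>
    hinj ha hb (by linarith)
  have hdeg : (Lagrange.nodal (Icc 1 (k - 1)) lam).degree < #(Icc 1 k) := by
    rw [Lagrange.degree_nodal, Nat.card_Icc, Nat.card_Icc]
    exact_mod_cast (by omega)
  have hsub (i : ℕ) : μ - (-lam i - 1) = lam i + μ + 1 := by ring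
  have hfrac := eval_div_prod_sub_eq_sum hpole hdeg fun i hi =>
    sub_ne_zero.1 (hsub i ▸ hμ i hi)
  simp only [Lagrange.eval_nodal, hsub] at hfrac
  rw [muntzMoment, hfrac]
  exact sum_congr rfl fun i hi => by rw [muntzC_eq_residue hi]

theorem muntzProjCoeff_succ_self (lam : ℕ → ℝ) (n : ℕ) (μ : ℝ) :
    muntzProjCoeff lam (n + 1) (n + 1) μ =
      (1 + 2 * lam (n + 1)) * muntzMoment lam (n + 1) μ * muntzC lam (n + 1) (n + 1) := by
  have herase : (Icc 1 (n + 1)).erase (n + 1) = Icc 1 n := by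
    rw [Icc_erase_right, Ico_add_one_right_eq_Icc]
  simp only [muntzProjCoeff, muntzMoment, muntzC, herase, prod_div_distrib, Nat.add_sub_cancel,
    prod_Icc_succ_top (Nat.le_add_left 1 n)]
  simp only [div_eq_mul_inv, mul_inv]
  ring

theorem muntzMoment_succ_mul_muntzC_succ (hi : i ∈ Icc 1 n) (μ : ℝ) :
    muntzMoment lam (n + 1) μ * muntzC lam i (n + 1) = muntzProjCoeff lam n i μ *
      ((μ - lam i) / ((lam (n + 1) + μ + 1) * (lam i - lam (n + 1)))) := by
  simp only [muntzProjCoeff, muntzMoment, muntzC, prod_erase_Icc_one_succ _ (mem_Icc.1 hi).2,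
    prod_div_distrib, Nat.add_sub_cancel, prod_Icc_succ_top (Nat.le_add_left 1 n),
    ← mul_prod_erase (Icc 1 n) (fun r => μ - lam r) hi]
  simp only [div_eq_mul_inv, mul_inv]
  ring

theorem muntzProjCoeff_succ (hi : i ∈ Icc 1 n) (hne : lam i ≠ lam (n + 1))
    (hμ : lam (n + 1) + μ + 1 ≠ 0) :
    muntzProjCoeff lam (n + 1) i μ = muntzProjCoeff lam n i μ +
      (1 + 2 * lam (n + 1)) * muntzMoment lam (n + 1) μ * muntzC lam i (n + 1) := by
  have hne' : lam i - lam (n + 1) ≠ 0 := sub_ne_zero.2 hne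
  have hfactor : (lam (n + 1) + lam i + 1) / (lam (n + 1) + μ + 1) *
      ((μ - lam (n + 1)) / (lam i - lam (n + 1))) = 1 + (1 + 2 * lam (n + 1)) *
        ((μ - lam i) / ((lam (n + 1) + μ + 1) * (lam i - lam (n + 1)))) := by
    field_simp
    ring
  rw [mul_assoc, muntzMoment_succ_mul_muntzC_succ hi, muntzProjCoeff,
    prod_Icc_succ_top (Nat.le_add_left 1 n), prod_erase_Icc_one_succ _ (mem_Icc.1 hi).2,
    mul_mul_mul_comm, ← muntzProjCoeff, hfactor]
  ring

theorem muntzProjCoeff_self (hinj : Set.InjOn lam (Icc 1 n : Finset ℕ)) (hj : j ∈ Icc 1 n)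
    (hμ : ∀ r ∈ Icc 1 n, lam r + lam j + 1 ≠ 0) : muntzProjCoeff lam n j (lam j) = 1 := by
  rw [muntzProjCoeff, prod_eq_one fun r hr => div_self (hμ r hr), one_mul]
  refine prod_eq_one fun r hr => div_self (sub_ne_zero.2 fun h => ?_)
  exact ne_of_mem_erase hr (hinj hj (mem_of_mem_erase hr) h).symm

theorem muntzProjCoeff_of_ne (hj : j ∈ Icc 1 n) (hij : i ≠ j) :
    muntzProjCoeff lam n i (lam j) = 0 := by
  rw [muntzProjCoeff, prod_eq_zero (mem_erase.2 ⟨hij.symm, hj⟩) (by rw [sub_self, zero_div]),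
    mul_zero]

theorem sum_muntzMoment_mul_muntzL (hinj : Set.InjOn lam (Icc 1 n : Finset ℕ))
    (hμ : ∀ i ∈ Icc 1 n, lam i + μ + 1 ≠ 0) (x : ℝ) :
    ∑ l ∈ Icc 1 n, (1 + 2 * lam l) * muntzMoment lam l μ * muntzL lam l x =
      ∑ i ∈ Icc 1 n, muntzProjCoeff lam n i μ * x ^ lam i := by
  induction n with
  | zero => simp
  | succ n ih =>
    have hsub : Icc 1 n ⊆ Icc 1 (n + 1) := Icc_subset_Icc_right n.le_succ
    have hlast : n + 1 ∈ Icc 1 (n + 1) := right_mem_Icc.2 (Nat.le_add_left 1 n)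
    have hne : ∀ i ∈ Icc 1 n, lam i ≠ lam (n + 1) := fun i hi h => by
      have := hinj (hsub hi) hlast h
      have := (mem_Icc.1 hi).2
      omega
    have hstep : ∀ i ∈ Icc 1 n, muntzProjCoeff lam (n + 1) i μ * x ^ lam i =
        muntzProjCoeff lam n i μ * x ^ lam i + (1 + 2 * lam (n + 1)) *
          muntzMoment lam (n + 1) μ * (muntzC lam i (n + 1) * x ^ lam i) := fun i hi => by
      rw [muntzProjCoeff_succ hi (hne i hi) (hμ _ hlast)]
      ring
    rw [sum_Icc_succ_top (Nat.le_add_left 1 n), sum_Icc_succ_top (Nat.le_add_left 1 n),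
      ih (hinj.mono (coe_subset.2 hsub)) fun i hi => hμ i (hsub hi), sum_congr rfl hstep,
      sum_add_distrib, ← mul_sum, muntzProjCoeff_succ_self, muntzL,
      sum_Icc_succ_top (Nat.le_add_left 1 n)]
    ring

theorem rpow_mul_rpow_eqOn_uIoc (a b : ℝ) (ht : 0 ≤ t) :
    Set.EqOn (fun x : ℝ => x ^ (a + b)) (fun x => x ^ a * x ^ b) (Set.uIoc 0 t) := fun x hx => by
  rw [Set.uIoc_of_le ht] at hx
  exact Real.rpow_add hx.1 a b

theorem intervalIntegrable_rpow_mul_rpow {a b : ℝ} (hab : -1 < a + b) (ht : 0 ≤ t) :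
    IntervalIntegrable (fun x : ℝ => x ^ a * x ^ b) volume 0 t :=
  (intervalIntegrable_rpow' hab).congr (rpow_mul_rpow_eqOn_uIoc a b ht)

theorem integral_rpow_mul_rpow {a b : ℝ} (hab : -1 < a + b) (ht : 0 ≤ t) :
    ∫ x in (0 : ℝ)..t, x ^ a * x ^ b = t ^ (a + b + 1) / (a + b + 1) := by
  rw [← integral_congr_ae (.of_forall (rpow_mul_rpow_eqOn_uIoc a b ht)),
    integral_rpow (.inl hab), Real.zero_rpow (by linarith), sub_zero]

theorem integral_comp_div_mul_rpow (f : ℝ → ℝ) (b : ℝ) (ht : 0 < t) :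
    ∫ v in (0 : ℝ)..t, f (v / t) * v ^ b = t ^ (b + 1) * ∫ x in (0 : ℝ)..1, f x * x ^ b := by
  have hscale : Set.EqOn (fun v => f (v / t) * v ^ b)
      (fun v => t ^ b * (f (v / t) * (v / t) ^ b)) (Set.uIcc 0 t) := fun v hv => by
    rw [Set.uIcc_of_le ht.le] at hv
    have := (Real.rpow_pos_of_pos ht b).ne'
    simp only [Real.div_rpow hv.1 ht.le]
    field_simp
  rw [integral_congr hscale, intervalIntegral.integral_const_mul,
    integral_comp_div (fun x => f x * x ^ b) ht.ne', zero_div, div_self ht.ne', smul_eq_mul,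
    Real.rpow_add_one ht.ne', mul_assoc]

theorem muntzL_mul_rpow (lam : ℕ → ℝ) (k : ℕ) (x μ : ℝ) :
    muntzL lam k x * x ^ μ = ∑ i ∈ Icc 1 k, muntzC lam i k * (x ^ lam i * x ^ μ) := by
  simp only [muntzL, sum_mul, mul_assoc]

theorem intervalIntegrable_muntzC_mul_rpow_mul_rpow (hμ : ∀ i ∈ Icc 1 k, -1 < lam i + μ) :
    ∀ i ∈ Icc 1 k, IntervalIntegrable
      (fun x : ℝ => muntzC lam i k * (x ^ lam i * x ^ μ)) volume 0 1 :=
  fun i hi => (intervalIntegrable_rpow_mul_rpow (hμ i hi) zero_le_one).const_mul _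

theorem intervalIntegrable_muntzL_mul_rpow (hμ : ∀ i ∈ Icc 1 k, -1 < lam i + μ) :
    IntervalIntegrable (fun x : ℝ => muntzL lam k x * x ^ μ) volume 0 1 := by
  simpa only [muntzL_mul_rpow, sum_fn] using
    IntervalIntegrable.sum _ (intervalIntegrable_muntzC_mul_rpow_mul_rpow hμ)

theorem integral_muntzL_mul_rpow (hk : 1 ≤ k) (hinj : Set.InjOn lam (Icc 1 k : Finset ℕ))
    (hμ : ∀ i ∈ Icc 1 k, -1 < lam i + μ) :
    ∫ x in (0 : ℝ)..1, muntzL lam k x * x ^ μ = muntzMoment lam k μ := by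
  simp only [muntzL_mul_rpow]
  rw [integral_finsetSum (intervalIntegrable_muntzC_mul_rpow_mul_rpow hμ),
    ← sum_muntzC_div hk hinj fun i hi => by linarith [hμ i hi]]
  refine sum_congr rfl fun i hi => ?_
  rw [intervalIntegral.integral_const_mul, integral_rpow_mul_rpow (hμ i hi) zero_le_one,
    Real.one_rpow, mul_one_div]

theorem muntzKernel_eq_div (lam : ℕ → ℝ) (n : ℕ) (t u v : ℝ) :
    muntzKernel lam n t u v = muntzKernel lam n 1 (u / t) (v / t) / t := by
  simp only [muntzKernel, div_one, one_mul]
  ring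

theorem integral_muntzKernel_one_mul_rpow (hinj : Set.InjOn lam (Icc 1 n : Finset ℕ))
    (hμ : ∀ i ∈ Icc 1 n, -1 < lam i + μ) (x : ℝ) :
    ∫ y in (0 : ℝ)..1, muntzKernel lam n 1 x y * y ^ μ =
      ∑ i ∈ Icc 1 n, muntzProjCoeff lam n i μ * x ^ lam i := by
  have hsub : ∀ l ∈ Icc 1 n, Icc 1 l ⊆ Icc 1 n := fun l hl =>
    Icc_subset_Icc_right (mem_Icc.1 hl).2
  have hexpand (y : ℝ) : muntzKernel lam n 1 x y * y ^ μ =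
      ∑ l ∈ Icc 1 n, (1 + 2 * lam l) * muntzL lam l x * (muntzL lam l y * y ^ μ) := by
    simp only [muntzKernel, div_one, one_mul, sum_mul, mul_assoc]
  simp only [hexpand]
  rw [integral_finsetSum fun l hl => (intervalIntegrable_muntzL_mul_rpow fun i hi =>
      hμ i (hsub l hl hi)).const_mul _,
    ← sum_muntzMoment_mul_muntzL hinj fun i hi => by linarith [hμ i hi]]
  refine sum_congr rfl fun l hl => ?_
  rw [intervalIntegral.integral_const_mul, integral_muntzL_mul_rpow (mem_Icc.1 hl).1
    (hinj.mono (coe_subset.2 (hsub l hl))) fun i hi => hμ i (hsub l hl hi)]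
  ring

theorem integral_muntzKernel_mul_rpow (hinj : Set.InjOn lam (Icc 1 n : Finset ℕ))
    (hμ : ∀ i ∈ Icc 1 n, -1 < lam i + μ) (ht : 0 < t) (u : ℝ) :
    ∫ v in (0 : ℝ)..t, muntzKernel lam n t u v * v ^ μ =
      t ^ μ * ∑ i ∈ Icc 1 n, muntzProjCoeff lam n i μ * (u / t) ^ lam i := by
  simp only [muntzKernel_eq_div lam n t u]
  rw [integral_comp_div_mul_rpow (fun x => muntzKernel lam n 1 (u / t) x / t) μ ht,
    Real.rpow_add_one ht.ne', ← integral_muntzKernel_one_mul_rpow hinj hμ]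
  simp only [div_mul_eq_mul_div, intervalIntegral.integral_div]
  field_simp

theorem muntz_reproducing_kernel_general (hinj : Set.InjOn lam (Icc 1 n : Finset ℕ))
    (hj : j ∈ Icc 1 n) (hpos : ∀ i ∈ Icc 1 n, -1 < lam i + lam j) (ht : 0 < t) (hu : 0 < u) :
    ∫ v in (0 : ℝ)..t, muntzKernel lam n t u v * v ^ lam j = u ^ lam j := by
  rw [integral_muntzKernel_mul_rpow hinj hpos ht, sum_eq_single_of_mem j hj fun i _ hij => by
      rw [muntzProjCoeff_of_ne hj hij, zero_mul],
    muntzProjCoeff_self hinj hj fun i hi => by linarith [hpos i hi], one_mul,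
    Real.div_rpow hu.le ht.le, mul_div_cancel₀ _ (Real.rpow_pos_of_pos ht _).ne']

theorem muntz_reproducing_kernel (n : ℕ) (hn : 1 ≤ n) (lam : ℕ → ℝ)
    (hpos : ∀ j ∈ Finset.Icc 1 n, lam j > -(1/2 : ℝ))
    (hdist : ∀ j ∈ Finset.Icc 1 n, ∀ k ∈ Finset.Icc 1 n, j ≠ k → lam j ≠ lam k)
    (t : ℝ) (ht : 0 < t) :
    ∀ j ∈ Finset.Icc 1 n, ∀ u ∈ Set.Ioc (0:ℝ) t,
      (∫ v in (0:ℝ)..t, muntzKernel lam n t u v * v ^ lam j) = u ^ lam j :=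
  fun j hj _ hu => muntz_reproducing_kernel_general
    (fun a ha b hb => Function.mtr (hdist a ha b hb)) hj
    (fun i hi => by linarith [hpos i hi, hpos j hj]) ht hu.1
end

section
/- Let λ_1, λ_2, … be distinct real numbers with λ_j > −1/2, define K_n(x) = ∑_{j=1}^n a_{j,n} x^{λ_j} on (0,1] with a_{j,n} = (∏_{l=1}^n (λ_j + λ_l + 1)) / (∏_{l=1, l≠j}^n (λ_j − λ_l)), and ρ_n(x) = 1 − ∫_1^x K_n(1/r) (dr/r) for x ≥ 1. Then for all integers 1 ≤ m < n, ∫_0^1 ( ρ_n(1/v) − ρ_m(1/v) )² dv ≤ 4 ∫_0^1 (K_n(u) − K_m(u))² du = 4 ∑_{j=m+1}^n (1 + 2λ_j). -/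
open Finset MeasureTheory intervalIntegral

/-- `ρ_n(x) = 1 - ∫_1^x K_n(1/r) dr/r` for `x ≥ 1`. -/
noncomputable def muntzRho (lam : ℕ → ℝ) (n : ℕ) (x : ℝ) : ℝ :=
  1 - ∫ r in (1:ℝ)..x, muntzK lam n (1 / r) / r

/-!
Substituting `r = 1 / u` turns `ρ_n(1/v)` into `1 - ∫_v^1 K_n(u)/u du`, so the inequality is Hardy's
inequality for the adjoint averaging operator applied to `K_n - K_m`. For the identity, `K_n` is the
kernel representing evaluation at `1` on the span of `x^{λ_1}, …, x^{λ_n}` in `L²(0,1)`. Hence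
`⟨K_n, K_m⟩ = K_m(1)` for `m ≤ n` and `‖K_n - K_m‖² = K_n(1) - K_m(1)`. Both the representing
property and the value `K_n(1) = ∑ (1 + 2 λ_j)` are divided differences, at the nodes `λ_j`, of
products of linear factors.
-/

section DividedDifference

variable {F ι : Type*} [Field F] [DecidableEq ι] {s : Finset ι} {v : ι → F}

lemma sum_prod_erase_sub_div_prod_erase_sub (hv : Set.InjOn v s) (w : ι → F) {k : ι} (hk : k ∈ s) :
    ∑ j ∈ s, (∏ l ∈ s.erase k, (v j - w l)) / ∏ l ∈ s.erase j, (v j - v l) = 1 := by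
  have hdeg : (#s : WithBot ℕ) = (Lagrange.nodal (s.erase k) w).degree + 1 := by
    rw [Lagrange.degree_nodal, ← card_erase_add_one hk]
    norm_cast
  simpa only [Lagrange.eval_nodal, Lagrange.nodal_monic.leadingCoeff]
    using (Lagrange.leadingCoeff_eq_sum hv hdeg).symm

lemma sum_prod_sub_div_prod_erase_sub (hv : Set.InjOn v s) (w : ι → F) :
    ∑ j ∈ s, (∏ l ∈ s, (v j - w l)) / ∏ l ∈ s.erase j, (v j - v l) = ∑ l ∈ s, (v l - w l) := by
  rcases s.eq_empty_or_nonempty with rfl | hs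
  · simp only [sum_empty]
  -- Subtracting `nodal s v`, which vanishes at every node, lowers the degree to `#s - 1`.
  have hdeg : (Lagrange.nodal s w - Lagrange.nodal s v).degree < #s := by
    simpa only [Lagrange.degree_nodal] using Polynomial.degree_sub_lt_left
      ((Lagrange.degree_nodal (v := w)).trans (Lagrange.degree_nodal (v := v)).symm)
      Lagrange.nodal_ne_zero
      (Lagrange.nodal_monic.leadingCoeff.trans Lagrange.nodal_monic.leadingCoeff.symm)
  calc ∑ j ∈ s, (∏ l ∈ s, (v j - w l)) / ∏ l ∈ s.erase j, (v j - v l)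
      = ∑ j ∈ s, (Lagrange.nodal s w - Lagrange.nodal s v).eval (v j) /
          ∏ l ∈ s.erase j, (v j - v l) := sum_congr rfl fun j hj => by
        rw [Polynomial.eval_sub, Lagrange.eval_nodal_at_node hj, sub_zero, Lagrange.eval_nodal]
    _ = (Lagrange.nodal s w - Lagrange.nodal s v).coeff (#s - 1) :=
        (Lagrange.coeff_eq_sum hv hdeg).symm
    _ = ∑ l ∈ s, (v l - w l) := by
        rw [Polynomial.coeff_sub, Lagrange.nodal_eq, Lagrange.nodal_eq,
          Polynomial.prod_X_sub_C_coeff_card_pred _ _ hs.card_pos,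
          Polynomial.prod_X_sub_C_coeff_card_pred _ _ hs.card_pos, sum_sub_distrib]
        ring

end DividedDifference

section SquareIntegrable

variable {a b : ℝ} {f g : ℝ → ℝ}

lemma intervalIntegrable_of_memLp_two (hab : a ≤ b)
    (hf : MemLp f 2 (volume.restrict (Set.Ioc a b))) : IntervalIntegrable f volume a b :=
  (intervalIntegrable_iff_integrableOn_Ioc_of_le hab).mpr (hf.integrable one_le_two)

lemma intervalIntegrable_mul_of_memLp_two (hab : a ≤ b)
    (hf : MemLp f 2 (volume.restrict (Set.Ioc a b)))
    (hg : MemLp g 2 (volume.restrict (Set.Ioc a b))) :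
    IntervalIntegrable (fun x => f x * g x) volume a b :=
  (intervalIntegrable_iff_integrableOn_Ioc_of_le hab).mpr (hf.integrable_mul hg)

lemma intervalIntegrable_sq_of_memLp_two (hab : a ≤ b)
    (hf : MemLp f 2 (volume.restrict (Set.Ioc a b))) :
    IntervalIntegrable (fun x => f x ^ 2) volume a b :=
  (intervalIntegrable_iff_integrableOn_Ioc_of_le hab).mpr hf.integrable_sq

lemma integral_sub_sq_of_memLp_two (hab : a ≤ b)
    (hf : MemLp f 2 (volume.restrict (Set.Ioc a b)))
    (hg : MemLp g 2 (volume.restrict (Set.Ioc a b))) :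
    ∫ x in a..b, (f x - g x) ^ 2 =
      (∫ x in a..b, f x * f x) - 2 * (∫ x in a..b, f x * g x) + ∫ x in a..b, g x * g x := by
  have hff := intervalIntegrable_mul_of_memLp_two hab hf hf
  have hfg := (intervalIntegrable_mul_of_memLp_two hab hf hg).const_mul 2
  have hgg := intervalIntegrable_mul_of_memLp_two hab hg hg
  rw [← intervalIntegral.integral_const_mul, ← integral_sub hff hfg,
    ← integral_add (hff.sub hfg) hgg]
  exact integral_congr fun x _ => by ring

end SquareIntegrable

section Hardy

/-- The adjoint `g ↦ ∫_u^b g(r)/r dr` of Hardy's averaging operator on `L²(0, b)`. -/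
noncomputable def hardyAdjoint (b : ℝ) (g : ℝ → ℝ) (u : ℝ) : ℝ :=
  ∫ r in u..b, g r / r

variable {a b : ℝ} {f g : ℝ → ℝ}

lemma intervalIntegrable_div_self (ha : 0 < a) (hab : a ≤ b)
    (hg : IntervalIntegrable g volume a b) :
    IntervalIntegrable (fun r => g r / r) volume a b := by
  simp only [div_eq_mul_inv]
  refine hg.mul_continuousOn (continuousOn_inv₀.mono fun r hr => ?_)
  rw [Set.uIcc_of_le hab] at hr
  exact (ha.trans_le hr.1).ne'

lemma hardyAdjoint_sub (ha : 0 < a) (hab : a ≤ b) (hf : IntervalIntegrable f volume a b)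
    (hg : IntervalIntegrable g volume a b) :
    hardyAdjoint b (fun r => f r - g r) a = hardyAdjoint b f a - hardyAdjoint b g a := by
  simp only [hardyAdjoint, sub_div]
  exact integral_sub (intervalIntegrable_div_self ha hab hf) (intervalIntegrable_div_self ha hab hg)

lemma hardyAdjoint_eq_neg_integral (b : ℝ) (g : ℝ → ℝ) :
    hardyAdjoint b g = fun u => -∫ r in b..u, g r / r :=
  funext fun _ => integral_symm _ _

lemma absolutelyContinuousOnInterval_hardyAdjoint (ha : 0 < a) (hab : a ≤ b)
    (hg : IntervalIntegrable g volume a b) :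
    AbsolutelyContinuousOnInterval (hardyAdjoint b g) a b := by
  rw [hardyAdjoint_eq_neg_integral]
  exact ((intervalIntegrable_div_self ha hab hg).absolutelyContinuousOnInterval_intervalIntegral
    Set.right_mem_uIcc).fun_neg

lemma ae_hasDerivAt_hardyAdjoint (ha : 0 < a) (hab : a ≤ b)
    (hg : IntervalIntegrable g volume a b) :
    ∀ᵐ v, v ∈ Set.uIcc a b → HasDerivAt (hardyAdjoint b g) (-(g v / v)) v := by
  rw [hardyAdjoint_eq_neg_integral]
  filter_upwards [(intervalIntegrable_div_self ha hab hg).ae_hasDerivAt_integral] with v hv hmem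
  exact (hv hmem b Set.right_mem_uIcc).fun_neg

lemma integral_hardyAdjoint_sq_sub (ha : 0 < a) (hab : a ≤ b)
    (hg : IntervalIntegrable g volume a b) :
    ∫ v in a..b, (hardyAdjoint b g v ^ 2 - 2 * (g v * hardyAdjoint b g v)) =
      -(a * hardyAdjoint b g a ^ 2) := by
  have hac := absolutelyContinuousOnInterval_hardyAdjoint ha hab hg
  have hid : AbsolutelyContinuousOnInterval (fun v : ℝ => v) a b :=
    contDiff_id.contDiffOn.absolutelyContinuousOnInterval
  have hderiv : ∀ᵐ v, v ∈ Set.uIoc a b →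
      hardyAdjoint b g v ^ 2 - 2 * (g v * hardyAdjoint b g v) =
        deriv (fun v => v * (hardyAdjoint b g v * hardyAdjoint b g v)) v := by
    filter_upwards [ae_hasDerivAt_hardyAdjoint ha hab hg] with v hH hv
    have hv0 : v ≠ 0 := (ha.trans (Set.uIoc_of_le hab ▸ hv).1).ne'
    have hHv := hH (Set.uIoc_subset_uIcc hv)
    rw [((hasDerivAt_id' v).fun_mul (hHv.fun_mul hHv)).deriv]
    field_simp
    ring
  rw [integral_congr_ae hderiv, (hid.fun_mul (hac.fun_mul hac)).integral_deriv_eq_sub]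
  simp only [hardyAdjoint, integral_same]
  ring

lemma continuousOn_hardyAdjoint (ha : 0 < a) (hab : a ≤ b)
    (hg : MemLp g 2 (volume.restrict (Set.Ioc a b))) :
    ContinuousOn (hardyAdjoint b g) (Set.uIcc a b) :=
  (absolutelyContinuousOnInterval_hardyAdjoint ha hab
    (intervalIntegrable_of_memLp_two hab hg)).continuousOn

lemma integral_hardyAdjoint_sq_le_of_pos (ha : 0 < a) (hab : a ≤ b)
    (hg : MemLp g 2 (volume.restrict (Set.Ioc a b))) :
    ∫ v in a..b, hardyAdjoint b g v ^ 2 ≤ 4 * ∫ u in a..b, g u ^ 2 := by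
  have hcont := continuousOn_hardyAdjoint ha hab hg
  have hgii := intervalIntegrable_of_memLp_two hab hg
  have hH2 : IntervalIntegrable (fun v => hardyAdjoint b g v ^ 2) volume a b :=
    (hcont.pow 2).intervalIntegrable
  have hg2 : IntervalIntegrable (fun v => 4 * g v ^ 2) volume a b :=
    (intervalIntegrable_sq_of_memLp_two hab hg).const_mul 4
  have hparts2 := (hH2.sub ((hgii.mul_continuousOn hcont).const_mul 2)).const_mul 2
  have hparts := integral_hardyAdjoint_sq_sub ha hab hgii
  -- Integration by parts gives `∫ H² ≤ 2 ∫ g H`; expanding `0 ≤ ∫ (H - 2 g)²` absorbs `∫ g H`.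
  have hsq : 0 ≤ ∫ v in a..b, (hardyAdjoint b g v - 2 * g v) ^ 2 :=
    integral_nonneg hab fun v _ => sq_nonneg _
  have hexpand : ∫ v in a..b, (hardyAdjoint b g v - 2 * g v) ^ 2 =
      2 * (∫ v in a..b, (hardyAdjoint b g v ^ 2 - 2 * (g v * hardyAdjoint b g v))) +
        4 * (∫ v in a..b, g v ^ 2) - ∫ v in a..b, hardyAdjoint b g v ^ 2 := by
    simp only [← intervalIntegral.integral_const_mul]
    rw [← integral_add hparts2 hg2, ← integral_sub (hparts2.add hg2) hH2]
    exact integral_congr fun v _ => by ring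
  have hboundary : 0 ≤ a * hardyAdjoint b g a ^ 2 := by positivity
  linarith

lemma integral_hardyAdjoint_sq_tail_le (ha : 0 < a) (hab : a ≤ b)
    (hg : MemLp g 2 (volume.restrict (Set.Ioc 0 b))) :
    ∫ v in a..b, hardyAdjoint b g v ^ 2 ≤ 4 * ∫ u in (0 : ℝ)..b, g u ^ 2 := by
  have hg2 := intervalIntegrable_sq_of_memLp_two (ha.le.trans hab) hg
  calc ∫ v in a..b, hardyAdjoint b g v ^ 2
      ≤ 4 * ∫ u in a..b, g u ^ 2 := integral_hardyAdjoint_sq_le_of_pos ha hab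
        (hg.mono_measure (Measure.restrict_mono (Set.Ioc_subset_Ioc_left ha.le) le_rfl))
    _ ≤ 4 * ∫ u in (0 : ℝ)..b, g u ^ 2 := by
        gcongr
        exact integral_mono_interval ha.le hab le_rfl (ae_of_all _ fun u => sq_nonneg (g u)) hg2

lemma integrableOn_hardyAdjoint_sq (hb : 0 < b)
    (hg : MemLp g 2 (volume.restrict (Set.Ioc 0 b))) :
    IntegrableOn (fun v => hardyAdjoint b g v ^ 2) (Set.Ioc 0 b) := by
  have hpos (n : ℕ) : 0 < b / (n + 1) := by positivity
  have hle (n : ℕ) : b / (n + 1) ≤ b := div_le_self hb.le (by simp)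
  have hlim : Filter.Tendsto (fun n : ℕ => b / ((n : ℝ) + 1)) Filter.atTop (nhds 0) := by
    simpa only [mul_one_div, mul_zero] using
      (tendsto_one_div_add_atTop_nhds_zero_nat (𝕜 := ℝ)).const_mul b
  refine integrableOn_Ioc_of_intervalIntegral_norm_bounded_left
    (I := 4 * ∫ u in (0 : ℝ)..b, g u ^ 2) (fun n => ?_) hlim
    (Filter.Eventually.of_forall fun n => ?_)
  · have hcont := continuousOn_hardyAdjoint (hpos n) (hle n)
      (hg.mono_measure (Measure.restrict_mono (Set.Ioc_subset_Ioc_left (hpos n).le) le_rfl))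
    exact (hcont.pow 2).intervalIntegrable.1
  · simp only [norm_pow, Real.norm_eq_abs, sq_abs]
    rw [← integral_of_le (hle n)]
    exact integral_hardyAdjoint_sq_tail_le (hpos n) (hle n) hg

theorem integral_hardyAdjoint_sq_le (hb : 0 ≤ b)
    (hg : MemLp g 2 (volume.restrict (Set.Ioc 0 b))) :
    ∫ v in (0 : ℝ)..b, hardyAdjoint b g v ^ 2 ≤ 4 * ∫ u in (0 : ℝ)..b, g u ^ 2 := by
  rcases hb.eq_or_lt with rfl | hb
  · simp only [integral_same, mul_zero, le_refl]
  have hint : IntegrableOn (fun v => hardyAdjoint b g v ^ 2) (Set.uIcc 0 b) := by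
    rw [Set.uIcc_of_le hb.le, integrableOn_Icc_iff_integrableOn_Ioc]
    exact integrableOn_hardyAdjoint_sq hb hg
  have hcont := continuousOn_primitive_interval_left hint 0 Set.left_mem_uIcc
  rw [Set.uIcc_of_le hb.le] at hcont
  have : (nhdsWithin 0 (Set.Ioc 0 b)).NeBot := left_nhdsWithin_Ioc_neBot hb
  exact le_of_tendsto (hcont.mono Set.Ioc_subset_Icc_self) (eventually_mem_nhdsWithin.mono
    fun a ha => integral_hardyAdjoint_sq_tail_le ha.1 ha.2 hg)

end Hardy

lemma integral_comp_one_div_div_self (f : ℝ → ℝ) {v : ℝ} (hv : 0 < v) :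
    ∫ r in (1 : ℝ)..1 / v, f (1 / r) / r = ∫ u in v..1, f u / u := by
  have hpos : ∀ r ∈ Set.uIcc 1 (1 / v), 0 < r := fun r hr =>
    (lt_min one_pos (one_div_pos.mpr hv)).trans_le hr.1
  have hsubst : ∫ r in (1 : ℝ)..1 / v, ((fun u => f u / u) ∘ Inv.inv) r * -(r ^ 2)⁻¹ =
      ∫ u in 1⁻¹..(1 / v)⁻¹, f u / u :=
    integral_comp_mul_deriv_of_deriv_nonpos
      (continuousOn_inv₀.mono fun r hr => (hpos r hr).ne')
      (fun r hr => hasDerivAt_inv (hpos r (Set.Ioo_subset_Icc_self hr)).ne')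
      (fun r _ => neg_nonpos.mpr (inv_nonneg.mpr (sq_nonneg r)))
  rw [inv_one, one_div, inv_inv, integral_symm v 1, ← one_div] at hsubst
  rw [← neg_inj, ← hsubst, ← intervalIntegral.integral_neg]
  refine integral_congr fun r hr => ?_
  have := (hpos r hr).ne'
  simp only [Function.comp_apply, one_div]
  field_simp

section Rpow

variable {p q c : ℝ}

lemma eqOn_rpow_add_Ioc (p q c : ℝ) :
    Set.EqOn (fun x : ℝ => x ^ (p + q)) (fun x => x ^ p * x ^ q) (Set.Ioc 0 c) :=
  fun _ hx => Real.rpow_add hx.1 p q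

lemma intervalIntegrable_rpow_mul_rpow_s17 (hpq : -1 < p + q) (hc : 0 ≤ c) :
    IntervalIntegrable (fun x : ℝ => x ^ p * x ^ q) volume 0 c :=
  (intervalIntegrable_rpow' hpq).congr (Set.uIoc_of_le hc ▸ eqOn_rpow_add_Ioc p q c)

lemma integral_rpow_mul_rpow_s17 (hpq : -1 < p + q) (hc : 0 ≤ c) :
    ∫ x in (0 : ℝ)..c, x ^ p * x ^ q = c ^ (p + q + 1) / (p + q + 1) := by
  rw [← integral_congr_Ioo_of_le hc ((eqOn_rpow_add_Ioc p q c).mono Set.Ioo_subset_Ioc_self),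
    integral_rpow (Or.inl hpq), Real.zero_rpow (by linarith), sub_zero]

lemma memLp_two_rpow (hp : -(1 / 2 : ℝ) < p) (hc : 0 ≤ c) :
    MemLp (fun x : ℝ => x ^ p) 2 (volume.restrict (Set.Ioc 0 c)) := by
  rw [memLp_two_iff_integrable_sq (by fun_prop)]
  simp only [sq]
  exact (intervalIntegrable_rpow_mul_rpow_s17 (by linarith) hc).1

end Rpow

section Muntz

variable {lam : ℕ → ℝ} {m n : ℕ}

lemma memLp_muntzK (hpos : ∀ j ∈ Icc 1 n, -(1 / 2 : ℝ) < lam j) :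
    MemLp (muntzK lam n) 2 (volume.restrict (Set.Ioc 0 1)) :=
  memLp_finsetSum _ fun j hj => (memLp_two_rpow (hpos j hj) zero_le_one).const_mul _

lemma muntzRho_one_div (lam : ℕ → ℝ) (n : ℕ) {v : ℝ} (hv : 0 < v) :
    muntzRho lam n (1 / v) = 1 - hardyAdjoint 1 (muntzK lam n) v := by
  rw [muntzRho, integral_comp_one_div_div_self _ hv, hardyAdjoint]

theorem integral_muntzRho_sub_sq_le (hm : ∀ j ∈ Icc 1 m, -(1 / 2 : ℝ) < lam j)
    (hn : ∀ j ∈ Icc 1 n, -(1 / 2 : ℝ) < lam j) :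
    ∫ v in (0 : ℝ)..1, (muntzRho lam n (1 / v) - muntzRho lam m (1 / v)) ^ 2 ≤
      4 * ∫ u in (0 : ℝ)..1, (muntzK lam n u - muntzK lam m u) ^ 2 := by
  have hKm := memLp_muntzK hm
  have hKn := memLp_muntzK hn
  have hrho : ∀ v ∈ Set.Ioc (0 : ℝ) 1, muntzRho lam n (1 / v) - muntzRho lam m (1 / v) =
      -hardyAdjoint 1 (fun u => muntzK lam n u - muntzK lam m u) v := by
    rintro v ⟨hv, hv1⟩
    have hii {k : ℕ} (hk : MemLp (muntzK lam k) 2 (volume.restrict (Set.Ioc 0 1))) :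
        IntervalIntegrable (muntzK lam k) volume v 1 :=
      (intervalIntegrable_of_memLp_two zero_le_one hk).mono_set
        (Set.uIcc_subset_uIcc (Set.mem_uIcc_of_le hv.le hv1) Set.right_mem_uIcc)
    rw [muntzRho_one_div lam n hv, muntzRho_one_div lam m hv, hardyAdjoint_sub hv hv1 (hii hKn)
      (hii hKm)]
    ring
  calc ∫ v in (0 : ℝ)..1, (muntzRho lam n (1 / v) - muntzRho lam m (1 / v)) ^ 2
      = ∫ v in (0 : ℝ)..1, hardyAdjoint 1 (fun u => muntzK lam n u - muntzK lam m u) v ^ 2 :=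
        integral_congr_Ioo_of_le zero_le_one fun v hv => by
          simp only [hrho v (Set.Ioo_subset_Ioc_self hv), neg_sq]
    _ ≤ 4 * ∫ u in (0 : ℝ)..1, (muntzK lam n u - muntzK lam m u) ^ 2 :=
        integral_hardyAdjoint_sq_le zero_le_one (hKn.sub hKm)

lemma sum_muntzA_div (hpos : ∀ j ∈ Icc 1 n, -(1 / 2 : ℝ) < lam j)
    (hinj : Set.InjOn lam (Icc 1 n : Finset ℕ)) {k : ℕ} (hk : k ∈ Icc 1 n) :
    ∑ j ∈ Icc 1 n, muntzA lam n j / (lam j + lam k + 1) = 1 := by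
  refine (sum_congr rfl fun j hj => ?_).trans
    (sum_prod_erase_sub_div_prod_erase_sub hinj (fun l => -(lam l + 1)) hk)
  have hne : lam j + lam k + 1 ≠ 0 := by linarith [hpos j hj, hpos k hk]
  simp only [sub_neg_eq_add, ← add_assoc]
  rw [muntzA, ← mul_prod_erase _ _ hk, div_right_comm, mul_div_cancel_left₀ _ hne]

lemma sum_muntzA (hinj : Set.InjOn lam (Icc 1 n : Finset ℕ)) :
    ∑ j ∈ Icc 1 n, muntzA lam n j = ∑ j ∈ Icc 1 n, (1 + 2 * lam j) := by
  have h := sum_prod_sub_div_prod_erase_sub hinj fun l => -(lam l + 1)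
  simp only [sub_neg_eq_add, ← add_assoc] at h
  exact h.trans (sum_congr rfl fun j _ => by ring)

lemma integral_muntzK_mul_rpow (hpos : ∀ j ∈ Icc 1 n, -(1 / 2 : ℝ) < lam j)
    (hinj : Set.InjOn lam (Icc 1 n : Finset ℕ)) {k : ℕ} (hk : k ∈ Icc 1 n) :
    ∫ x in (0 : ℝ)..1, muntzK lam n x * x ^ lam k = 1 := by
  have hexp : ∀ j ∈ Icc 1 n, -1 < lam j + lam k := fun j hj => by linarith [hpos j hj, hpos k hk]
  calc ∫ x in (0 : ℝ)..1, muntzK lam n x * x ^ lam k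
      = ∫ x in (0 : ℝ)..1, ∑ j ∈ Icc 1 n, muntzA lam n j * (x ^ lam j * x ^ lam k) := by
        simp only [muntzK, sum_mul, mul_assoc]
    _ = ∑ j ∈ Icc 1 n, muntzA lam n j * ∫ x in (0 : ℝ)..1, x ^ lam j * x ^ lam k := by
        rw [integral_finsetSum fun j hj =>
          (intervalIntegrable_rpow_mul_rpow_s17 (hexp j hj) zero_le_one).const_mul _]
        simp only [intervalIntegral.integral_const_mul]
    _ = ∑ j ∈ Icc 1 n, muntzA lam n j / (lam j + lam k + 1) := sum_congr rfl fun j hj => by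
        rw [integral_rpow_mul_rpow_s17 (hexp j hj) zero_le_one, Real.one_rpow, mul_one_div]
    _ = 1 := sum_muntzA_div hpos hinj hk

lemma integral_muntzK_mul_muntzK (hpos : ∀ j ∈ Icc 1 n, -(1 / 2 : ℝ) < lam j)
    (hinj : Set.InjOn lam (Icc 1 n : Finset ℕ)) (hmn : m ≤ n) :
    ∫ x in (0 : ℝ)..1, muntzK lam n x * muntzK lam m x = ∑ j ∈ Icc 1 m, (1 + 2 * lam j) := by
  have hsub : Icc 1 m ⊆ Icc 1 n := Icc_subset_Icc_right hmn
  have hint : ∀ k ∈ Icc 1 m,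
      IntervalIntegrable (fun x => muntzK lam n x * x ^ lam k) volume 0 1 := fun k hk =>
    intervalIntegrable_mul_of_memLp_two zero_le_one (memLp_muntzK hpos)
      (memLp_two_rpow (hpos k (hsub hk)) zero_le_one)
  calc ∫ x in (0 : ℝ)..1, muntzK lam n x * muntzK lam m x
      = ∫ x in (0 : ℝ)..1, ∑ k ∈ Icc 1 m, muntzA lam m k * (muntzK lam n x * x ^ lam k) := by
        simp only [muntzK.eq_1 lam m, mul_sum, mul_left_comm]
    _ = ∑ k ∈ Icc 1 m, muntzA lam m k * ∫ x in (0 : ℝ)..1, muntzK lam n x * x ^ lam k := by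
        rw [integral_finsetSum fun k hk => (hint k hk).const_mul _]
        simp only [intervalIntegral.integral_const_mul]
    _ = ∑ k ∈ Icc 1 m, muntzA lam m k := sum_congr rfl fun k hk => by
        rw [integral_muntzK_mul_rpow hpos hinj (hsub hk), mul_one]
    _ = ∑ k ∈ Icc 1 m, (1 + 2 * lam k) := sum_muntzA (hinj.mono (coe_subset.mpr hsub))

theorem integral_muntzK_sub_sq (hpos : ∀ j ∈ Icc 1 n, -(1 / 2 : ℝ) < lam j)
    (hinj : Set.InjOn lam (Icc 1 n : Finset ℕ)) (hmn : m ≤ n) :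
    ∫ u in (0 : ℝ)..1, (muntzK lam n u - muntzK lam m u) ^ 2 =
      ∑ j ∈ Icc (m + 1) n, (1 + 2 * lam j) := by
  have hposm : ∀ j ∈ Icc 1 m, -(1 / 2 : ℝ) < lam j := fun j hj =>
    hpos j (Icc_subset_Icc_right hmn hj)
  have hinjm : Set.InjOn lam (Icc 1 m : Finset ℕ) :=
    hinj.mono (coe_subset.mpr (Icc_subset_Icc_right hmn))
  have hconsec : ∑ j ∈ Icc 1 m, (1 + 2 * lam j) + ∑ j ∈ Icc (m + 1) n, (1 + 2 * lam j) =
      ∑ j ∈ Icc 1 n, (1 + 2 * lam j) := by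
    simpa only [← Icc_add_one_left_eq_Ioc, zero_add] using
      sum_Ioc_consecutive (fun j => 1 + 2 * lam j) (Nat.zero_le m) hmn
  rw [integral_sub_sq_of_memLp_two zero_le_one (memLp_muntzK hpos) (memLp_muntzK hposm),
    integral_muntzK_mul_muntzK hpos hinj le_rfl, integral_muntzK_mul_muntzK hpos hinj hmn,
    integral_muntzK_mul_muntzK hposm hinjm le_rfl]
  linarith

end Muntz

theorem muntzRho_L2_estimate (lam : ℕ → ℝ)
    (hpos : ∀ j, 1 ≤ j → lam j > -(1/2 : ℝ))
    (hdist : ∀ j k, 1 ≤ j → 1 ≤ k → j ≠ k → lam j ≠ lam k) :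
    ∀ m n : ℕ, 1 ≤ m → m < n →
      (∫ v in (0:ℝ)..1, (muntzRho lam n (1 / v) - muntzRho lam m (1 / v)) ^ 2)
          ≤ 4 * ∫ u in (0:ℝ)..1, (muntzK lam n u - muntzK lam m u) ^ 2 ∧
        4 * (∫ u in (0:ℝ)..1, (muntzK lam n u - muntzK lam m u) ^ 2)
          = 4 * ∑ j ∈ Finset.Icc (m + 1) n, (1 + 2 * lam j) := by
  intro m n _ hmn
  have hpos_le (k : ℕ) : ∀ j ∈ Icc 1 k, -(1 / 2 : ℝ) < lam j :=
    fun j hj => hpos j (mem_Icc.mp hj).1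
  have hinj : Set.InjOn lam (Icc 1 n : Finset ℕ) := fun j hj k hk =>
    not_imp_not.mp (hdist j k (mem_Icc.mp hj).1 (mem_Icc.mp hk).1)
  exact ⟨integral_muntzRho_sub_sq_le (hpos_le m) (hpos_le n),
    congrArg (4 * ·) (integral_muntzK_sub_sq (hpos_le n) hinj hmn.le)⟩
end
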